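/- Let T be a string of length n, 1 ≤ i ≤ j ≤ n, and let T[μ..j] be the maximal suffix of T[i..j]. Let ℓ be an index with i ≤ ℓ ≤ μ. Let p_1 ∈ [μ, j] be such that P_1 = T[p_1..j] is a prefix of T[μ..j], with ℓ ≤ p_1 − 1, and let p_2 be the starting position of the maximal suffix in Suf[ℓ, p_1 − 1]; set P_2 = T[p_2..j]. If P_1 is not a prefix of P_2, then μ = p_1. Otherwise, P_2 is also a prefix of T[μ..j] and |P_2| > |P_1|. -/

import Mathlib

variable {α : Type*} [LinearOrder α]

/-- `substr T i j` is the 1-indexed substring `T[i..j]` (inclusive). -/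
def substr (T : List α) (i j : ℕ) : List α := (T.drop (i - 1)).take (j - i + 1)

/-- `sufFrom T i` is the 1-indexed suffix `T[i..]`. -/
def sufFrom (T : List α) (i : ℕ) : List α := T.drop (i - 1)

/-- `s` is the lexicographically maximal nonempty suffix of `w`. -/
def IsMaxSuffix (w s : List α) : Prop :=
  s ≠ [] ∧ s <:+ w ∧ ∀ t, t ≠ [] → t <:+ w → ¬ List.Lex (· < ·) s t

/-!
If `μ < p₁`, then `μ` competes with `p₂` in `Suf[ℓ, p₁ - 1]`, so `T[μ..] ≤ T[p₂..]`, while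
maximality of `T[μ..j]` gives the opposite comparison `P₂ ≤ T[μ..j]` of prefixes of these two
strings. A comparison that is reversed by truncation cannot be decided at a letter, so `P₂` is a
prefix of `T[μ..j]`; being longer than `P₁`, it has `P₁` as a prefix too. If `μ = p₁`, then
`P₁ = T[μ..j]`, and a prefix `P₁` of `P₂ ≤ P₁` can only be `P₂` itself.
-/

lemma prefix_of_prefix_of_le {a b r s : List α} (hr : r <+: a) (hs : s <+: b) (hab : a ≤ b)
    (hsr : s ≤ r) : s <+: r := by
  induction s generalizing a b r with
  | nil => exact List.nil_prefix
  | cons y s ih =>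
    obtain ⟨b, rfl, hsb⟩ := List.cons_prefix_iff.mp hs
    cases r with
    | nil => exact absurd (List.nil_lt_cons y s) hsr.not_gt
    | cons x r =>
      obtain ⟨a, rfl, hra⟩ := List.cons_prefix_iff.mp hr
      have hxy : x ≤ y := not_lt.mp fun h => hab.not_gt (.rel h)
      have hyx : y ≤ x := not_lt.mp fun h => hsr.not_gt (.rel h)
      obtain rfl : x = y := hxy.antisymm hyx
      have hab' : a ≤ b := not_lt.mp fun h => hab.not_gt (.cons h)
      have hsr' : s ≤ r := not_lt.mp fun h => hsr.not_gt (.cons h)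
      exact List.cons_prefix_cons.mpr ⟨rfl, ih hra hsb hab' hsr'⟩

lemma IsMaxSuffix.le {w s t : List α} (hs : IsMaxSuffix w s) (ht : t <:+ w) : t ≤ s := by
  rcases eq_or_ne t [] with rfl | ht₀
  · exact not_lt.mp (List.nil_le s)
  · exact not_lt.mp (hs.2.2 t ht₀ ht)

section

omit [LinearOrder α]

lemma substr_prefix_sufFrom (T : List α) (p j : ℕ) : substr T p j <+: sufFrom T p :=
  List.take_prefix _ _

lemma substr_suffix_substr (T : List α) {i p j : ℕ} (hi : 1 ≤ i) (hip : i ≤ p) (hpj : p ≤ j) :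
    substr T p j <:+ substr T i j := by
  have h : substr T p j = (substr T i j).drop (p - i) := by
    rw [substr, substr, List.drop_take, List.drop_drop]
    congr 2 <;> omega
  exact h ▸ List.drop_suffix _ _

lemma length_substr (T : List α) {p j : ℕ} (hp : 1 ≤ p) (hpj : p ≤ j) (hj : j ≤ T.length) :
    (substr T p j).length = j - p + 1 := by
  rw [substr, List.length_take, List.length_drop]
  omega

end

/-- Let `T` be a string of length `n`, `1 ≤ i ≤ j ≤ n`, and let `T[μ..j]` be the maximal suffix
of `T[i..j]`.  Let `i ≤ ℓ ≤ μ`, let `p₁ ∈ [μ, j]` be such that `P₁ = T[p₁..j]` is a prefix of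
`T[μ..j]` and `ℓ ≤ p₁ - 1`, and let `p₂` be the starting position of the maximal suffix in
`Suf[ℓ, p₁-1]`; set `P₂ = T[p₂..j]`.  If `P₁` is not a prefix of `P₂`, then `μ = p₁`.
Otherwise `P₂` is also a prefix of `T[μ..j]` and `|P₂| > |P₁|`. -/
theorem stmt_7 (T : List α) (i j μ ℓ p₁ p₂ : ℕ)
    (hi : 1 ≤ i) (hij : i ≤ j) (hj : j ≤ T.length)
    (hμ1 : i ≤ μ) (hμ2 : μ ≤ j)
    (hμmax : IsMaxSuffix (substr T i j) (substr T μ j))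
    (hℓ1 : i ≤ ℓ) (hℓ2 : ℓ ≤ μ)
    (hp11 : μ ≤ p₁) (hp12 : p₁ ≤ j)
    (hP1 : substr T p₁ j <+: substr T μ j)
    (hℓp1 : ℓ ≤ p₁ - 1)
    (hp21 : ℓ ≤ p₂) (hp22 : p₂ ≤ p₁ - 1)
    (hp2max : ∀ q, ℓ ≤ q → q ≤ p₁ - 1 →
      ¬ List.Lex (· < ·) (sufFrom T p₂) (sufFrom T q)) :
    (¬ substr T p₁ j <+: substr T p₂ j → μ = p₁) ∧
    (substr T p₁ j <+: substr T p₂ j →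
      substr T p₂ j <+: substr T μ j ∧
      (substr T p₁ j).length < (substr T p₂ j).length) := by
  have hP₂_le : substr T p₂ j ≤ substr T μ j :=
    hμmax.le (substr_suffix_substr T hi (hℓ1.trans hp21) (by omega))
  have hlen : (substr T p₁ j).length < (substr T p₂ j).length := by
    rw [length_substr T (by omega) hp12 hj, length_substr T (by omega) (by omega) hj]
    omega
  rcases hp11.eq_or_lt with rfl | hlt
  · refine ⟨fun _ => rfl, fun hP => ⟨?_, hlen⟩⟩
    have hP₂_eq : substr T p₂ j = substr T μ j := hP₂_le.antisymm (not_lt.mp hP.le)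
    exact hP₂_eq ▸ List.prefix_rfl
  · have hsuf : sufFrom T μ ≤ sufFrom T p₂ := not_lt.mp (hp2max μ hℓ2 (by omega))
    have hP₂ : substr T p₂ j <+: substr T μ j :=
      prefix_of_prefix_of_le (substr_prefix_sufFrom T μ j) (substr_prefix_sufFrom T p₂ j)
        hsuf hP₂_le
    have hP₁ : substr T p₁ j <+: substr T p₂ j :=
      List.prefix_of_prefix_length_le hP1 hP₂ hlen.le
    exact ⟨fun hP => absurd hP₁ hP, fun _ => ⟨hP₂, hlen⟩⟩
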